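/- For every n ≥ 1, the complement of the path graph P_{2n} on 2n vertices can be represented by a 2-uniform word, i.e., there is a word over its vertex set in which every vertex occurs exactly twice that represents the graph. -/

import Mathlib

/-- Two distinct letters `x` and `y` alternate in the word `w` if, after deleting all
letters other than `x` and `y`, no two consecutive letters of the remaining word are equal. -/
def Alternate {V : Type*} [DecidableEq V] (w : List V) (x y : V) : Prop :=
  (w.filter fun z => decide (z = x ∨ z = y)).Chain' (· ≠ ·)

/-- A word `w` represents the simple graph `G` if every vertex occurs in `w` at least once
and two distinct vertices alternate in `w` exactly when they are adjacent in `G`. -/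
def Represents {V : Type*} [DecidableEq V] (G : SimpleGraph V) (w : List V) : Prop :=
  (∀ v : V, v ∈ w) ∧ ∀ x y : V, x ≠ y → (Alternate w x y ↔ G.Adj x y)

/-- The path graph on `n` vertices: `i` and `j` are adjacent iff `|i - j| = 1`. -/
def pathGraph (n : ℕ) : SimpleGraph (Fin n) :=
  SimpleGraph.fromRel fun i j => (i : ℕ) + 1 = (j : ℕ)

/-!
If a word `w` is the concatenation of two permutations of `V`, then `x` and `y` alternate in `w`
exactly when the two permutations list them in the same order. Hence such a word represents the
complement of the graph of pairs that the two permutations order differently.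

The path graph is such a graph of inversions. Start from the list `0, 1, 2, …` and delay every
odd number by `2`: this gives `0, 2, 1, 4, 3, …` and inverts precisely the pairs
`{1, 2}, {3, 4}, …`. Delaying every even number instead gives `1, 0, 3, 2, …` and inverts
`{0, 1}, {2, 3}, …`. Each edge of the path is inverted by exactly one of the two lists, and no
other pair is inverted by either.
-/

section Alternation

variable {V : Type*} [DecidableEq V] {r s : V → V → Prop} [Std.Asymm r] [Std.Asymm s]
  {l k : List V} {x y : V}

theorem filter_pair_eq_of_pairwise (hl : l.Pairwise r) (hx : x ∈ l) (hy : y ∈ l) (hxy : r x y) :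
    l.filter (fun z => decide (z = x ∨ z = y)) = [x, y] := by
  have hne : x ≠ y := ne_of_irrefl hxy
  have hperm : (l.filter fun z => decide (z = x ∨ z = y)).Perm [x, y] := by
    rw [List.perm_ext_iff_of_nodup (hl.nodup.filter _) (by simp [hne])]
    intro z
    simp only [List.mem_filter, decide_eq_true_eq, List.mem_cons, List.not_mem_nil, or_false]
    exact and_iff_right_of_imp (by rintro (rfl | rfl) <;> assumption)
  exact hperm.eq_of_pairwise (fun a b _ _ hab hba => (asymm hab hba).elim) (hl.filter _)
    (List.pairwise_pair.mpr hxy)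

theorem alternate_iff_isChain {w : List V} :
    Alternate w x y ↔ (w.filter fun z => decide (z = x ∨ z = y)).IsChain (· ≠ ·) :=
  Iff.rfl

theorem alternate_comm {w : List V} : Alternate w x y ↔ Alternate w y x := by
  simp only [alternate_iff_isChain, or_comm]

theorem alternate_append_of_pairwise (hl : l.Pairwise r) (hk : k.Pairwise s)
    (hxl : x ∈ l) (hyl : y ∈ l) (hxk : x ∈ k) (hyk : y ∈ k) (hr : r x y) (hs : s x y) :
    Alternate (l ++ k) x y := by
  have hne : x ≠ y := ne_of_irrefl hr
  rw [alternate_iff_isChain, List.filter_append, filter_pair_eq_of_pairwise hl hxl hyl hr,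
    filter_pair_eq_of_pairwise hk hxk hyk hs]
  simp [hne, hne.symm]

theorem not_alternate_append_of_pairwise (hl : l.Pairwise r) (hk : k.Pairwise s)
    (hxl : x ∈ l) (hyl : y ∈ l) (hxk : x ∈ k) (hyk : y ∈ k) (hr : r x y) (hs : s y x) :
    ¬ Alternate (l ++ k) x y := by
  have hfilter : k.filter (fun z => decide (z = x ∨ z = y)) = [y, x] := by
    simpa only [or_comm] using filter_pair_eq_of_pairwise hk hyk hxk hs
  rw [alternate_iff_isChain, List.filter_append, filter_pair_eq_of_pairwise hl hxl hyl hr, hfilter]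
  simp

end Alternation

section PermutationGraph

variable {V α β : Type*} [LinearOrder α] [LinearOrder β] {f : V → α} {g : V → β}

/-- The permutation graph of two rankings `f` and `g` of the vertices: two vertices are adjacent
when `f` and `g` rank them in opposite orders. Ties are allowed and never give an edge. -/
def permutationGraph (f : V → α) (g : V → β) : SimpleGraph V :=
  SimpleGraph.fromRel fun x y => f x < f y ∧ g y < g x

theorem compl_permutationGraph_adj_iff {x y : V} (hf : f x ≠ f y) (hg : g x ≠ g y) :
    (permutationGraph f g)ᶜ.Adj x y ↔ (f x < f y ↔ g x < g y) := by
  simp only [permutationGraph, SimpleGraph.compl_adj, SimpleGraph.fromRel_adj]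
  grind

theorem exists_pairwise_lt_of_injective [Finite V] (hf : f.Injective) :
    ∃ l : List V, (∀ v, v ∈ l) ∧ l.Pairwise (f · < f ·) := by
  have := Fintype.ofFinite V
  let : LinearOrder V := LinearOrder.lift' f hf
  exact ⟨Finset.univ.sort, fun v => (Finset.mem_sort _).mpr (Finset.mem_univ v),
    (Finset.sortedLT_sort _).pairwise⟩

theorem apply_ne_of_pairwise_lt {l : List V} (hl : l.Pairwise (f · < f ·)) {x y : V}
    (hx : x ∈ l) (hy : y ∈ l) (hxy : x ≠ y) : f x ≠ f y := by
  have : Std.Symm (f · ≠ f ·) := ⟨fun _ _ => Ne.symm⟩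
  exact (hl.imp LT.lt.ne).forall hx hy hxy

variable [DecidableEq V]

theorem alternate_append_iff_of_pairwise_lt {l k : List V}
    (hl : l.Pairwise (f · < f ·)) (hk : k.Pairwise (g · < g ·)) {x y : V}
    (hxl : x ∈ l) (hyl : y ∈ l) (hxk : x ∈ k) (hyk : y ∈ k) (hxy : x ≠ y) :
    Alternate (l ++ k) x y ↔ (f x < f y ↔ g x < g y) := by
  have : Std.Asymm (f · < f ·) := ⟨fun _ _ => lt_asymm⟩
  have : Std.Asymm (g · < g ·) := ⟨fun _ _ => lt_asymm⟩
  rcases (apply_ne_of_pairwise_lt hl hxl hyl hxy).lt_or_gt with hfxy | hfyx <;>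
    rcases (apply_ne_of_pairwise_lt hk hxk hyk hxy).lt_or_gt with hgxy | hgyx
  · exact iff_of_true (alternate_append_of_pairwise hl hk hxl hyl hxk hyk hfxy hgxy)
      (iff_of_true hfxy hgxy)
  · exact iff_of_false (not_alternate_append_of_pairwise hl hk hxl hyl hxk hyk hfxy hgyx)
      fun h => hgyx.asymm (h.mp hfxy)
  · rw [alternate_comm]
    exact iff_of_false (not_alternate_append_of_pairwise hl hk hyl hxl hyk hxk hfyx hgxy)
      fun h => hfyx.asymm (h.mpr hgxy)
  · rw [alternate_comm]
    exact iff_of_true (alternate_append_of_pairwise hl hk hyl hxl hyk hxk hfyx hgyx)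
      (iff_of_false hfyx.asymm hgyx.asymm)

theorem exists_two_uniform_represents_compl_permutationGraph [Finite V] (hf : f.Injective)
    (hg : g.Injective) :
    ∃ w : List V, Represents (permutationGraph f g)ᶜ w ∧ ∀ v, w.count v = 2 := by
  obtain ⟨l, hl_mem, hl⟩ := exists_pairwise_lt_of_injective hf
  obtain ⟨k, hk_mem, hk⟩ := exists_pairwise_lt_of_injective hg
  refine ⟨l ++ k, ⟨fun v => List.mem_append_left k (hl_mem v), fun x y hxy => ?_⟩, fun v => ?_⟩
  · rw [compl_permutationGraph_adj_iff (hf.ne hxy) (hg.ne hxy)]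
    exact alternate_append_iff_of_pairwise_lt hl hk
      (hl_mem x) (hl_mem y) (hk_mem x) (hk_mem y) hxy
  · have hl_nodup : l.Nodup := hl.imp fun h => ne_of_apply_ne f h.ne
    have hk_nodup : k.Nodup := hk.imp fun h => ne_of_apply_ne g h.ne
    rw [List.count_append, List.count_eq_one_of_mem hl_nodup (hl_mem v),
      List.count_eq_one_of_mem hk_nodup (hk_mem v)]

end PermutationGraph

/-- The rank of `i` when every number of residue `c` modulo `2` is delayed by `2`; with `c = 1` and
`c = 0` these are the two rankings that realize the path as a permutation graph. The ranks taken
need not be consecutive. -/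
def delayParity (c i : ℕ) : ℕ :=
  if i % 2 = c then i + 2 else i

theorem delayParity_injective (c : ℕ) : (delayParity c).Injective := by
  intro i j hij
  unfold delayParity at hij
  split_ifs at hij <;> omega

theorem delayParity_inversion_iff (i j : ℕ) :
    delayParity 1 i < delayParity 1 j ∧ delayParity 0 j < delayParity 0 i ∨
      delayParity 1 j < delayParity 1 i ∧ delayParity 0 i < delayParity 0 j ↔
    i + 1 = j ∨ j + 1 = i := by
  unfold delayParity
  split_ifs <;> omega

theorem pathGraph_eq_permutationGraph (m : ℕ) :
    pathGraph m =
      permutationGraph (fun i : Fin m => delayParity 1 i) (fun i : Fin m => delayParity 0 i) := by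
  ext i j
  simp only [pathGraph, permutationGraph, SimpleGraph.fromRel_adj, delayParity_inversion_iff]

theorem complement_pathGraph_even_two_uniform_general (m : ℕ) :
    ∃ w : List (Fin m), Represents (pathGraph m)ᶜ w ∧ ∀ v : Fin m, w.count v = 2 := by
  rw [pathGraph_eq_permutationGraph]
  exact exists_two_uniform_represents_compl_permutationGraph
    ((delayParity_injective 1).comp Fin.val_injective)
    ((delayParity_injective 0).comp Fin.val_injective)

/-- The complement of the path graph `P_{2n}` on `2n` vertices can be represented by a
2-uniform word: a word in which every vertex occurs exactly twice. -/
theorem complement_pathGraph_even_two_uniform :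
    ∀ n : ℕ, 1 ≤ n → ∃ w : List (Fin (2 * n)),
      Represents (pathGraph (2 * n))ᶜ w ∧ ∀ v : Fin (2 * n), w.count v = 2 :=
  fun n _ => complement_pathGraph_even_two_uniform_general (2 * n)
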